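/- arXiv:1507.05581 — 13 statements merged into one kernel-verified Lean document; each statement's English description precedes it below -/
import Mathlib

section
/- Composition lemma for sorted list segments (instance of the theorem that syntactically compositional predicates are semantically compositional): for all list heaps h₁, h₂ with disjoint domains, locations E₁, E₂, E₃ and multisets of integers M₁, M₂, M₃, if lseg(h₁, E₁, M₁, E₂, M₂) and lseg(h₂, E₂, M₂, E₃, M₃) hold, then lseg(h₁ ∗ h₂, E₁, M₁, E₃, M₃) holds. -/
/-!
A sorted list segment is a path whose steps are single cells with pairwise disjoint footprints. Its
states are pairs `(E, M)`, and whether a cell is a legal step from `(E, M)` to `(X, M₁)` does not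
depend on the endpoint `(F, M')`. Such paths can be concatenated whenever their footprints are
disjoint; this independence of the endpoint is what syntactic compositionality expresses.
-/

/-- Locations are natural numbers; `0` plays the role of nil. -/
abbrev Loc : Type := ℕ

/-- A list heap: finite partial map from locations to (next, data) pairs. -/
abbrev ListHeap : Type := Finmap (fun _ : Loc => Loc × ℤ)

/-- Sorted list segment `lseg h E M F M'`. -/
inductive lseg : ListHeap → Loc → Multiset ℤ → Loc → Multiset ℤ → Prop
  | base (h : ListHeap) (E F : Loc) (M M' : Multiset ℤ) :
      E = F → M = M' → h = ∅ → lseg h E M F M'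
  | ind (h : ListHeap) (E F : Loc) (M M' : Multiset ℤ)
      (X : Loc) (v : ℤ) (M₁ : Multiset ℤ) (h' : ListHeap) :
      (Finmap.singleton E (X, v)).Disjoint h' →
      h = Finmap.singleton E (X, v) ∪ h' →
      lseg h' X M₁ F M' →
      (∀ m ∈ M₁, v ≤ m) →
      M = {v} + M₁ →
      lseg h E M F M'

section SepReflTransGen

variable {α σ : Type*} {β : α → Type*} [DecidableEq α]

/-- The separating reflexive transitive closure of a relation whose steps carry a heap as footprint:
paths from one state to another along steps with pairwise disjoint footprints, indexed by the union
of these footprints. It models inductive segment predicates whose endpoint occurs only in the base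
case and in the recursive call. -/
inductive SepReflTransGen (step : Finmap β → σ → σ → Prop) : Finmap β → σ → σ → Prop
  | refl (s : σ) : SepReflTransGen step ∅ s s
  | head {h₁ h₂ : Finmap β} {s t u : σ} (hdisj : h₁.Disjoint h₂) (hstep : step h₁ s t)
      (htail : SepReflTransGen step h₂ t u) : SepReflTransGen step (h₁ ∪ h₂) s u

theorem SepReflTransGen.trans {step : Finmap β → σ → σ → Prop} {h₁ h₂ : Finmap β} {s t u : σ}
    (hdisj : h₁.Disjoint h₂) (hst : SepReflTransGen step h₁ s t)
    (htu : SepReflTransGen step h₂ t u) : SepReflTransGen step (h₁ ∪ h₂) s u := by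
  induction hst with
  | refl => rwa [Finmap.empty_union]
  | @head h₀ h' _ _ _ hdisj' hstep _ ih =>
    obtain ⟨hdisj₀, hdisj_tail⟩ := (Finmap.disjoint_union_left h₀ h' h₂).mp hdisj
    rw [Finmap.union_assoc]
    exact .head ((Finmap.disjoint_union_right h₀ h' h₂).mpr ⟨hdisj', hdisj₀⟩) hstep
      (ih hdisj_tail htu)

end SepReflTransGen

/-- The step relation of sorted list segments: the heap is a single cell at `E`, with next-pointer
`X` and a value that is at most every element of `M₁` and extends `M₁` to `M`. A state pairs a
location with the multiset parameter that `lseg` attaches to it. -/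
def SortedCell (h : ListHeap) : Loc × Multiset ℤ → Loc × Multiset ℤ → Prop
  | (E, M), (X, M₁) =>
    ∃ v : ℤ, h = Finmap.singleton E (X, v) ∧ (∀ m ∈ M₁, v ≤ m) ∧ M = {v} + M₁

theorem sepReflTransGen_of_lseg {h : ListHeap} {E F : Loc} {M M' : Multiset ℤ}
    (hseg : lseg h E M F M') : SepReflTransGen SortedCell h (E, M) (F, M') := by
  induction hseg with
  | base h E F M M' hE hM hh =>
    subst hE hM hh
    exact .refl _
  | ind h E F M M' X v M₁ h' hdisj hh _ hv hM ih =>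
    subst hh
    exact .head hdisj ⟨v, rfl, hv, hM⟩ ih

theorem lseg_of_sepReflTransGen {h : ListHeap} {s t : Loc × Multiset ℤ}
    (hpath : SepReflTransGen SortedCell h s t) : lseg h s.1 s.2 t.1 t.2 := by
  induction hpath with
  | refl => exact .base _ _ _ _ _ rfl rfl rfl
  | head hdisj hcell _ ih =>
    obtain ⟨v, rfl, hv, hM⟩ := hcell
    exact .ind _ _ _ _ _ _ v _ _ hdisj rfl ih hv hM

theorem lseg_iff_sepReflTransGen {h : ListHeap} {E F : Loc} {M M' : Multiset ℤ} :
    lseg h E M F M' ↔ SepReflTransGen SortedCell h (E, M) (F, M') :=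
  ⟨sepReflTransGen_of_lseg, lseg_of_sepReflTransGen⟩

/-- Composition lemma for sorted list segments. -/
theorem lseg_composition
    (h₁ h₂ : ListHeap) (hdisj : h₁.Disjoint h₂)
    (E₁ E₂ E₃ : Loc) (M₁ M₂ M₃ : Multiset ℤ)
    (H₁ : lseg h₁ E₁ M₁ E₂ M₂) (H₂ : lseg h₂ E₂ M₂ E₃ M₃) :
    lseg (h₁ ∪ h₂) E₁ M₁ E₃ M₃ := by
  rw [lseg_iff_sepReflTransGen] at H₁ H₂ ⊢
  exact H₁.trans hdisj H₂
end

section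
/- Data-constrained composition lemma for three-parameter sorted list segments: for all list heaps h₁, h₂ with disjoint domains, locations E₁, E₂, E₃ and multisets of integers M₁, M₂, if lseg₃(h₁, E₁, M₁, E₂) and lseg₃(h₂, E₂, M₂, E₃) hold and M₁ ≤ M₂ (every element of M₁ is less than or equal to every element of M₂), then lseg₃(h₁ ∗ h₂, E₁, M₁ + M₂, E₃) holds. -/
/-- Three-parameter sorted list segment `lseg₃ h E M F`. -/
inductive lseg₃ : ListHeap → Loc → Multiset ℤ → Loc → Prop
  | base (h : ListHeap) (E F : Loc) (M : Multiset ℤ) :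
      E = F → M = ∅ → h = ∅ → lseg₃ h E M F
  | ind (h : ListHeap) (E F : Loc) (M : Multiset ℤ)
      (X : Loc) (v : ℤ) (M₁ : Multiset ℤ) (h' : ListHeap) :
      (Finmap.singleton E (X, v)).Disjoint h' →
      h = Finmap.singleton E (X, v) ∪ h' →
      lseg₃ h' X M₁ F →
      (∀ m ∈ M₁, v ≤ m) →
      M = {v} + M₁ →
      lseg₃ h E M F

theorem lseg₃.cons {h : ListHeap} {E X F : Loc} {v : ℤ} {M : Multiset ℤ}
    (hdisj : (Finmap.singleton E (X, v)).Disjoint h) (hv : ∀ m ∈ M, v ≤ m) (H : lseg₃ h X M F) :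
    lseg₃ (Finmap.singleton E (X, v) ∪ h) E (v ::ₘ M) F :=
  .ind _ _ _ _ X v M h hdisj rfl H hv (Multiset.singleton_add v M).symm

/-- Data-constrained composition lemma for three-parameter sorted list segments. -/
theorem lseg₃_composition
    (h₁ h₂ : ListHeap) (hdisj : h₁.Disjoint h₂)
    (E₁ E₂ E₃ : Loc) (M₁ M₂ : Multiset ℤ)
    (H₁ : lseg₃ h₁ E₁ M₁ E₂) (H₂ : lseg₃ h₂ E₂ M₂ E₃)
    (hle : ∀ m₁ ∈ M₁, ∀ m₂ ∈ M₂, m₁ ≤ m₂) :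
    lseg₃ (h₁ ∪ h₂) E₁ (M₁ + M₂) E₃ := by
  induction H₁ with
  | base _ _ _ _ hE hM hh =>
    subst hE hM hh
    simpa only [Finmap.empty_union, Multiset.empty_eq_zero, zero_add] using H₂
  | ind _ E _ _ X v M h hcell hh _ hv hM ih =>
    subst hh hM
    rw [Multiset.singleton_add] at hle ⊢
    obtain ⟨hcell₂, htail⟩ := (Finmap.disjoint_union_left _ _ _).1 hdisj
    obtain ⟨hv₂, hle_tail⟩ := Multiset.forall_mem_cons.1 hle
    have hcell_union : (Finmap.singleton E (X, v)).Disjoint (h ∪ h₂) :=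
      (Finmap.disjoint_union_right _ _ _).2 ⟨hcell, hcell₂⟩
    have hv_add : ∀ m ∈ M + M₂, v ≤ m := fun m hm =>
      (Multiset.mem_add.1 hm).elim (hv m) (hv₂ m)
    rw [Finmap.union_assoc, Multiset.cons_add]
    exact .cons hcell_union hv_add (ih htail H₂ hle_tail)
end

section
/- Composition lemma for binary search trees with one hole (instance of the theorem that syntactically compositional predicates are semantically compositional): for all tree heaps h₁, h₂ with disjoint domains, locations E₁, E₂, E₃ and multisets of integers M₁, M₂, M₃, if bsthole(h₁, E₁, M₁, E₂, M₂) and bsthole(h₂, E₂, M₂, E₃, M₃) hold, then bsthole(h₁ ∗ h₂, E₁, M₁, E₃, M₃) holds. -/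
/-- A tree heap: finite partial map from locations to (left, right, data) triples. -/
abbrev TreeHeap : Type := Finmap (fun _ : Loc => Loc × Loc × ℤ)

/-- Binary search tree predicate `bst h E M`. -/
inductive bst : TreeHeap → Loc → Multiset ℤ → Prop
  | base (h : TreeHeap) (E : Loc) (M : Multiset ℤ) :
      E = 0 → M = ∅ → h = ∅ → bst h E M
  | ind (h : TreeHeap) (E : Loc) (M : Multiset ℤ)
      (X Y : Loc) (v : ℤ) (M₁ M₂ : Multiset ℤ) (h₁ h₂ : TreeHeap) :
      (Finmap.singleton E (X, Y, v)).Disjoint h₁ →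
      (Finmap.singleton E (X, Y, v)).Disjoint h₂ →
      h₁.Disjoint h₂ →
      h = Finmap.singleton E (X, Y, v) ∪ h₁ ∪ h₂ →
      bst h₁ X M₁ → bst h₂ Y M₂ →
      M = {v} + M₁ + M₂ →
      (∀ m ∈ M₁, m < v) → (∀ m ∈ M₂, v < m) →
      bst h E M

/-- Binary search tree with one hole `bsthole h E M₁ F M₂`. -/
inductive bsthole : TreeHeap → Loc → Multiset ℤ → Loc → Multiset ℤ → Prop
  | base (h : TreeHeap) (E F : Loc) (M₁ M₂ : Multiset ℤ) :
      E = F → M₁ = M₂ → h = ∅ → bsthole h E M₁ F M₂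
  | right (h : TreeHeap) (E F : Loc) (M₁ M₂ : Multiset ℤ)
      (X Y : Loc) (v : ℤ) (M₃ M₄ : Multiset ℤ) (h₁ h₂ : TreeHeap) :
      (Finmap.singleton E (X, Y, v)).Disjoint h₁ →
      (Finmap.singleton E (X, Y, v)).Disjoint h₂ →
      h₁.Disjoint h₂ →
      h = Finmap.singleton E (X, Y, v) ∪ h₁ ∪ h₂ →
      bst h₁ X M₃ → bsthole h₂ Y M₄ F M₂ →
      M₁ = {v} + M₃ + M₄ →
      (∀ m ∈ M₃, m < v) → (∀ m ∈ M₄, v < m) →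
      bsthole h E M₁ F M₂
  | left (h : TreeHeap) (E F : Loc) (M₁ M₂ : Multiset ℤ)
      (X Y : Loc) (v : ℤ) (M₃ M₄ : Multiset ℤ) (h₁ h₂ : TreeHeap) :
      (Finmap.singleton E (X, Y, v)).Disjoint h₁ →
      (Finmap.singleton E (X, Y, v)).Disjoint h₂ →
      h₁.Disjoint h₂ →
      h = Finmap.singleton E (X, Y, v) ∪ h₁ ∪ h₂ →
      bsthole h₁ X M₃ F M₂ → bst h₂ Y M₄ →
      M₁ = {v} + M₃ + M₄ →
      (∀ m ∈ M₃, m < v) → (∀ m ∈ M₄, v < m) →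
      bsthole h E M₁ F M₂

/-!
A tree with a hole is a path from its root to the hole, with complete search trees hanging off it.
By induction along this path, `h₂` can be pushed into the subtree containing the hole. At every
node, the ordering constraints mention only the root value and the source multisets of the
subtrees, never the hole or its multiset, so they survive the replacement of `(E₂, M₂)` by
`(E₃, M₃)`; what remains is to redistribute `h₂` among pairwise disjoint heaps.
-/

section SepUnion

variable {α : Type*} {β : α → Type*} [DecidableEq α] {s s₁ s₂ s₃ t : Finmap β}

/-- The decomposition `s = s₁ ∗ s₂ ∗ s₃` of a finite map into pairwise disjoint parts. A tree heap
splits this way into its root cell, its left subtree and its right subtree; the fields are listed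
in the order in which the constructors of `bst` and `bsthole` take them. -/
structure IsSepUnion (s s₁ s₂ s₃ : Finmap β) : Prop where
  disjoint₁₂ : s₁.Disjoint s₂
  disjoint₁₃ : s₁.Disjoint s₃
  disjoint₂₃ : s₂.Disjoint s₃
  eq_union : s = s₁ ∪ s₂ ∪ s₃

namespace IsSepUnion

theorem swap_right (hs : IsSepUnion s s₁ s₂ s₃) : IsSepUnion s s₁ s₃ s₂ where
  disjoint₁₂ := hs.disjoint₁₃
  disjoint₁₃ := hs.disjoint₁₂
  disjoint₂₃ := hs.disjoint₂₃.symm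
  eq_union := by
    rw [hs.eq_union, Finmap.union_assoc, Finmap.union_comm_of_disjoint hs.disjoint₂₃,
      ← Finmap.union_assoc]

theorem disjoint_iff (hs : IsSepUnion s s₁ s₂ s₃) :
    s.Disjoint t ↔ s₁.Disjoint t ∧ s₂.Disjoint t ∧ s₃.Disjoint t := by
  rw [hs.eq_union, Finmap.disjoint_union_left, Finmap.disjoint_union_left, and_assoc]

theorem union_right (hs : IsSepUnion s s₁ s₂ s₃) (hst : s.Disjoint t) :
    IsSepUnion (s ∪ t) s₁ s₂ (s₃ ∪ t) := by
  obtain ⟨h₁t, h₂t, -⟩ := hs.disjoint_iff.mp hst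
  exact
    { disjoint₁₂ := hs.disjoint₁₂
      disjoint₁₃ := (Finmap.disjoint_union_right _ _ _).mpr ⟨hs.disjoint₁₃, h₁t⟩
      disjoint₂₃ := (Finmap.disjoint_union_right _ _ _).mpr ⟨hs.disjoint₂₃, h₂t⟩
      eq_union := by rw [hs.eq_union, Finmap.union_assoc] }

theorem union_middle (hs : IsSepUnion s s₁ s₂ s₃) (hst : s.Disjoint t) :
    IsSepUnion (s ∪ t) s₁ (s₂ ∪ t) s₃ :=
  (hs.swap_right.union_right hst).swap_right

end IsSepUnion

end SepUnion

/-- Composition lemma for binary search trees with one hole. -/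
theorem bsthole_composition
    (h₁ h₂ : TreeHeap) (hdisj : h₁.Disjoint h₂)
    (E₁ E₂ E₃ : Loc) (M₁ M₂ M₃ : Multiset ℤ)
    (H₁ : bsthole h₁ E₁ M₁ E₂ M₂) (H₂ : bsthole h₂ E₂ M₂ E₃ M₃) :
    bsthole (h₁ ∪ h₂) E₁ M₁ E₃ M₃ := by
  induction H₁ with
  | base _ _ _ _ _ hE hM hh =>
    subst hE hM hh
    rwa [Finmap.empty_union]
  | right _ _ _ _ _ X Y v M₃ M₄ l r hvl hvr hlr hh hl _ hM hlt hgt ih =>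
    have hsplit : IsSepUnion _ _ l r := ⟨hvl, hvr, hlr, hh⟩
    obtain ⟨-, -, hrh₂⟩ := hsplit.disjoint_iff.mp hdisj
    obtain ⟨hvl', hvr', hlr', hh'⟩ := hsplit.union_right hdisj
    exact .right _ _ _ _ _ X Y v M₃ M₄ l (r ∪ h₂) hvl' hvr' hlr' hh' hl (ih hrh₂ H₂) hM hlt hgt
  | left _ _ _ _ _ X Y v M₃ M₄ l r hvl hvr hlr hh _ hr hM hlt hgt ih =>
    have hsplit : IsSepUnion _ _ l r := ⟨hvl, hvr, hlr, hh⟩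
    obtain ⟨-, hlh₂, -⟩ := hsplit.disjoint_iff.mp hdisj
    obtain ⟨hvl', hvr', hlr', hh'⟩ := hsplit.union_middle hdisj
    exact .left _ _ _ _ _ X Y v M₃ M₄ (l ∪ h₂) r hvl' hvr' hlr' hh' (ih hlh₂ H₂) hr hM hlt hgt
end

section
/- Completion equivalence for binary search trees (instance of the completion theorem): for every tree heap h, location E and multiset of integers M, bst(h, E, M) holds if and only if bsthole(h, E, M, nil, ∅) holds. -/
/-!
The multiset `M₁` in `bsthole h E M₁ F M₂` already counts the content `M₂` of the missing subtree,
so every ordering condition along the path to the hole is unaffected by plugging in a tree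
`bst k F M₂` on a disjoint heap `k`. Plugging the empty tree into a hole at nil gives one direction;
conversely, following right children down to nil exhibits such a hole in any search tree.
-/

theorem union_right_comm_of_disjoint {α : Type*} {β : α → Type*} [DecidableEq α]
    {s t u : Finmap β} (htu : t.Disjoint u) : s ∪ t ∪ u = s ∪ u ∪ t := by
  rw [Finmap.union_assoc, Finmap.union_comm_of_disjoint htu, ← Finmap.union_assoc]

theorem bst_nil : bst ∅ 0 ∅ :=
  .base _ _ _ rfl rfl rfl

theorem bsthole.bst_union {h k : TreeHeap} {E F : Loc} {M N : Multiset ℤ}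
    (hole : bsthole h E M F N) (tree : bst k F N) (hk : h.Disjoint k) : bst (h ∪ k) E M := by
  induction hole with
  | base _ _ _ _ _ hE hM hh =>
    rwa [hh, Finmap.empty_union, hE, hM]
  | right _ _ _ _ _ X Y v M₃ M₄ h₁ h₂ root_h₁ root_h₂ h₁_h₂ hh hX _ hM lt_v v_lt ih =>
    subst hh
    simp only [Finmap.disjoint_union_left] at hk
    obtain ⟨⟨root_k, h₁_k⟩, h₂_k⟩ := hk
    exact .ind _ _ _ X Y v M₃ M₄ h₁ (h₂ ∪ k) root_h₁
      ((Finmap.disjoint_union_right _ _ _).2 ⟨root_h₂, root_k⟩)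
      ((Finmap.disjoint_union_right _ _ _).2 ⟨h₁_h₂, h₁_k⟩)
      Finmap.union_assoc hX (ih tree h₂_k) hM lt_v v_lt
  | left _ E _ _ _ X Y v M₃ M₄ h₁ h₂ root_h₁ root_h₂ h₁_h₂ hh _ hY hM lt_v v_lt ih =>
    subst hh
    simp only [Finmap.disjoint_union_left] at hk
    obtain ⟨⟨root_k, h₁_k⟩, h₂_k⟩ := hk
    have heap_eq : Finmap.singleton E (X, Y, v) ∪ h₁ ∪ h₂ ∪ k =
        Finmap.singleton E (X, Y, v) ∪ (h₁ ∪ k) ∪ h₂ := by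
      rw [union_right_comm_of_disjoint h₂_k, Finmap.union_assoc (s₂ := h₁)]
    exact .ind _ _ _ X Y v M₃ M₄ (h₁ ∪ k) h₂
      ((Finmap.disjoint_union_right _ _ _).2 ⟨root_h₁, root_k⟩) root_h₂
      ((Finmap.disjoint_union_left _ _ _).2 ⟨h₁_h₂, h₂_k.symm⟩)
      heap_eq (ih tree h₁_k) hY hM lt_v v_lt

theorem bst.bsthole_nil {h : TreeHeap} {E : Loc} {M : Multiset ℤ} (tree : bst h E M) :
    bsthole h E M 0 ∅ := by
  induction tree with
  | base h E M hE hM hh => exact .base h E 0 M ∅ hE hM hh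
  | ind h E M X Y v M₁ M₂ h₁ h₂ root_h₁ root_h₂ h₁_h₂ hh hX _ hM lt_v v_lt _ ih_right =>
    exact .right h E 0 M ∅ X Y v M₁ M₂ h₁ h₂ root_h₁ root_h₂ h₁_h₂ hh hX ih_right
      hM lt_v v_lt

/-- Completion equivalence: `bst h E M` iff `bsthole h E M nil ∅`. -/
theorem bst_iff_bsthole_nil
    (h : TreeHeap) (E : Loc) (M : Multiset ℤ) :
    bst h E M ↔ bsthole h E M 0 ∅ := by
  refine ⟨bst.bsthole_nil, fun hole => ?_⟩
  have filled : bst (h ∪ ∅) E M := hole.bst_union bst_nil (Finmap.disjoint_empty h).symm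
  rwa [Finmap.union_empty] at filled
end

section
/- Completion lemma for binary search trees with one hole: for all tree heaps h₁, h₂ with disjoint domains, locations E, F and multisets of integers M₁, M₂, if bsthole(h₁, E, M₁, F, M₂) and bst(h₂, F, M₂) hold, then bst(h₁ ∗ h₂, E, M₁) holds. -/
/-! In `bsthole h E M₁ F M₂` the multiset `M₁` already counts the contents `M₂` of the missing
subtree. Filling the hole therefore changes no multiset along the path to it, so every ordering
condition carries over, and only the heap decomposition at each node has to absorb the new part. -/

section Heap

variable {α : Type*} {β : α → Type*} [DecidableEq α] {h h₀ h₁ h₂ k : Finmap β}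

/-- The separating decomposition `h = h₀ ∗ h₁ ∗ h₂`, used to split the heap of a tree into its root
cell and its two subtrees. -/
structure IsSepUnion_s6 (h h₀ h₁ h₂ : Finmap β) : Prop where
  disjoint₀₁ : h₀.Disjoint h₁
  disjoint₀₂ : h₀.Disjoint h₂
  disjoint₁₂ : h₁.Disjoint h₂
  eq_union : h = h₀ ∪ h₁ ∪ h₂

namespace IsSepUnion_s6

theorem swap (hs : IsSepUnion_s6 h h₀ h₁ h₂) : IsSepUnion_s6 h h₀ h₂ h₁ where
  disjoint₀₁ := hs.disjoint₀₂
  disjoint₀₂ := hs.disjoint₀₁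
  disjoint₁₂ := hs.disjoint₁₂.symm
  eq_union := by
    rw [hs.eq_union, Finmap.union_assoc, Finmap.union_comm_of_disjoint hs.disjoint₁₂,
      ← Finmap.union_assoc]

theorem disjoint_iff_s6 (hs : IsSepUnion_s6 h h₀ h₁ h₂) :
    h.Disjoint k ↔ (h₀.Disjoint k ∧ h₁.Disjoint k) ∧ h₂.Disjoint k := by
  rw [hs.eq_union, Finmap.disjoint_union_left, Finmap.disjoint_union_left]

theorem union_right_s6 (hs : IsSepUnion_s6 h h₀ h₁ h₂) (hk : h.Disjoint k) :
    IsSepUnion_s6 (h ∪ k) h₀ h₁ (h₂ ∪ k) := by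
  obtain ⟨⟨h₀k, h₁k⟩, -⟩ := hs.disjoint_iff_s6.mp hk
  exact
    { disjoint₀₁ := hs.disjoint₀₁
      disjoint₀₂ := (Finmap.disjoint_union_right _ _ _).mpr ⟨hs.disjoint₀₂, h₀k⟩
      disjoint₁₂ := (Finmap.disjoint_union_right _ _ _).mpr ⟨hs.disjoint₁₂, h₁k⟩
      eq_union := by rw [hs.eq_union, Finmap.union_assoc] }

theorem union_left (hs : IsSepUnion_s6 h h₀ h₁ h₂) (hk : h.Disjoint k) :
    IsSepUnion_s6 (h ∪ k) h₀ (h₁ ∪ k) h₂ :=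
  (hs.swap.union_right_s6 hk).swap

end IsSepUnion_s6

end Heap

theorem bst.of_isSepUnion {h h₁ h₂ : TreeHeap} {E X Y : Loc} {v : ℤ} {M₁ M₂ : Multiset ℤ}
    (hs : IsSepUnion_s6 h (Finmap.singleton E (X, Y, v)) h₁ h₂)
    (hX : bst h₁ X M₁) (hY : bst h₂ Y M₂) (hlt : ∀ m ∈ M₁, m < v) (hgt : ∀ m ∈ M₂, v < m) :
    bst h E ({v} + M₁ + M₂) :=
  .ind h E _ X Y v M₁ M₂ h₁ h₂ hs.disjoint₀₁ hs.disjoint₀₂ hs.disjoint₁₂ hs.eq_union hX hY rfl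
    hlt hgt

/-- Completion lemma for binary search trees with one hole. -/
theorem bsthole_bst_completion
    (h₁ h₂ : TreeHeap) (hdisj : h₁.Disjoint h₂)
    (E F : Loc) (M₁ M₂ : Multiset ℤ)
    (H₁ : bsthole h₁ E M₁ F M₂) (H₂ : bst h₂ F M₂) :
    bst (h₁ ∪ h₂) E M₁ := by
  induction H₁ with
  | base h E F M₁ M₂ hE hM hh =>
    subst hE hM hh
    rwa [Finmap.empty_union]
  | right h E F M₁ M₂ X Y v M₃ M₄ k₁ k₂ d₀₁ d₀₂ d₁₂ hh hX _ hM hlt hgt ih =>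
    subst hM
    have hs : IsSepUnion_s6 h (Finmap.singleton E (X, Y, v)) k₁ k₂ := ⟨d₀₁, d₀₂, d₁₂, hh⟩
    have hY : bst (k₂ ∪ h₂) Y M₄ := ih (hs.disjoint_iff_s6.mp hdisj).2 H₂
    exact .of_isSepUnion (hs.union_right_s6 hdisj) hX hY hlt hgt
  | left h E F M₁ M₂ X Y v M₃ M₄ k₁ k₂ d₀₁ d₀₂ d₁₂ hh _ hY hM hlt hgt ih =>
    subst hM
    have hs : IsSepUnion_s6 h (Finmap.singleton E (X, Y, v)) k₁ k₂ := ⟨d₀₁, d₀₂, d₁₂, hh⟩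
    have hX : bst (k₁ ∪ h₂) X M₃ := ih (hs.disjoint_iff_s6.mp hdisj).1.2 H₂
    exact .of_isSepUnion (hs.union_left hdisj) hX hY hlt hgt
end

section
/- Stronger lemma, second entailment (instance of the theorem on stronger predicates): for all tree heaps h₁, h₂ with disjoint domains, locations E₁, E₂, E₃ and multisets of integers M₁, M₂, M₃, if natbsth(h₁, E₁, M₁, E₂, M₂) and bsthole(h₂, E₂, M₂, E₃, M₃) hold, then bsthole(h₁ ∗ h₂, E₁, M₁, E₃, M₃) holds. -/
/-- `natbsth` : same rules as `bsthole` with the additional constraint `M₃ ≥ 0`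
added to the body of each inductive rule. -/
inductive natbsth : TreeHeap → Loc → Multiset ℤ → Loc → Multiset ℤ → Prop
  | base (h : TreeHeap) (E F : Loc) (M₁ M₂ : Multiset ℤ) :
      E = F → M₁ = M₂ → h = ∅ → natbsth h E M₁ F M₂
  | right (h : TreeHeap) (E F : Loc) (M₁ M₂ : Multiset ℤ)
      (X Y : Loc) (v : ℤ) (M₃ M₄ : Multiset ℤ) (h₁ h₂ : TreeHeap) :
      (Finmap.singleton E (X, Y, v)).Disjoint h₁ →
      (Finmap.singleton E (X, Y, v)).Disjoint h₂ →
      h₁.Disjoint h₂ →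
      h = Finmap.singleton E (X, Y, v) ∪ h₁ ∪ h₂ →
      bst h₁ X M₃ → natbsth h₂ Y M₄ F M₂ →
      M₁ = {v} + M₃ + M₄ →
      (∀ m ∈ M₃, m < v) → (∀ m ∈ M₄, v < m) →
      (∀ m ∈ M₃, (0 : ℤ) ≤ m) →
      natbsth h E M₁ F M₂
  | left (h : TreeHeap) (E F : Loc) (M₁ M₂ : Multiset ℤ)
      (X Y : Loc) (v : ℤ) (M₃ M₄ : Multiset ℤ) (h₁ h₂ : TreeHeap) :
      (Finmap.singleton E (X, Y, v)).Disjoint h₁ →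
      (Finmap.singleton E (X, Y, v)).Disjoint h₂ →
      h₁.Disjoint h₂ →
      h = Finmap.singleton E (X, Y, v) ∪ h₁ ∪ h₂ →
      natbsth h₁ X M₃ F M₂ → bst h₂ Y M₄ →
      M₁ = {v} + M₃ + M₄ →
      (∀ m ∈ M₃, m < v) → (∀ m ∈ M₄, v < m) →
      (∀ m ∈ M₃, (0 : ℤ) ≤ m) →
      natbsth h E M₁ F M₂

theorem natbsth.to_bsthole {h : TreeHeap} {E F : Loc} {M N : Multiset ℤ}
    (H : natbsth h E M F N) : bsthole h E M F N := by
  induction H with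
  | base h E F M N hE hM hh => exact .base h E F M N hE hM hh
  | right h E F M N X Y v Ml Mr hl hr hvl hvr hlr hh Hl _ hM hlt hgt _ ih =>
    exact .right h E F M N X Y v Ml Mr hl hr hvl hvr hlr hh Hl ih hM hlt hgt
  | left h E F M N X Y v Ml Mr hl hr hvl hvr hlr hh _ Hr hM hlt hgt _ ih =>
    exact .left h E F M N X Y v Ml Mr hl hr hvl hvr hlr hh ih Hr hM hlt hgt

theorem finmap_union_right_comm_of_disjoint {α : Type*} {β : α → Type*} [DecidableEq α]
    (s : Finmap β) {t u : Finmap β} (htu : t.Disjoint u) : s ∪ t ∪ u = s ∪ u ∪ t := by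
  rw [Finmap.union_assoc, Finmap.union_comm_of_disjoint htu, ← Finmap.union_assoc]

theorem natbsth_bsthole_composition_general {h k : TreeHeap} {E F G : Loc} {M N P : Multiset ℤ}
    (hk : h.Disjoint k) (H : bsthole h E M F N) (K : bsthole k F N G P) :
    bsthole (h ∪ k) E M G P := by
  induction H with
  | base h E F M N hE hM hh =>
    subst hE hM hh
    rwa [Finmap.empty_union]
  | right h E F M N X Y v Ml Mr hl hr hvl hvr hlr hh Hl _ hM hlt hgt ih =>
    subst hh
    simp only [Finmap.disjoint_union_left] at hk
    obtain ⟨⟨hvk, hlk⟩, hrk⟩ := hk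
    have hvrk := (Finmap.disjoint_union_right _ _ _).2 ⟨hvr, hvk⟩
    have hlrk := (Finmap.disjoint_union_right _ _ _).2 ⟨hlr, hlk⟩
    exact .right _ E G M P X Y v Ml Mr hl (hr ∪ k) hvl hvrk hlrk Finmap.union_assoc
      Hl (ih hrk K) hM hlt hgt
  | left h E F M N X Y v Ml Mr hl hr hvl hvr hlr hh _ Hr hM hlt hgt ih =>
    subst hh
    simp only [Finmap.disjoint_union_left] at hk
    obtain ⟨⟨hvk, hlk⟩, hrk⟩ := hk
    have hvlk := (Finmap.disjoint_union_right _ _ _).2 ⟨hvl, hvk⟩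
    have hlkr := (Finmap.disjoint_union_left _ _ _).2 ⟨hlr, hrk.symm⟩
    have heap_eq : .singleton E (X, Y, v) ∪ hl ∪ hr ∪ k =
        .singleton E (X, Y, v) ∪ (hl ∪ k) ∪ hr := by
      rw [finmap_union_right_comm_of_disjoint _ hrk, Finmap.union_assoc (s₂ := hl)]
    exact .left _ E G M P X Y v Ml Mr (hl ∪ k) hr hvlk hvr hlkr heap_eq
      (ih hlk K) Hr hM hlt hgt

/-- Stronger lemma, second entailment. -/
theorem natbsth_bsthole_composition
    (h₁ h₂ : TreeHeap) (hdisj : h₁.Disjoint h₂)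
    (E₁ E₂ E₃ : Loc) (M₁ M₂ M₃ : Multiset ℤ)
    (H₁ : natbsth h₁ E₁ M₁ E₂ M₂) (H₂ : bsthole h₂ E₂ M₂ E₃ M₃) :
    bsthole (h₁ ∪ h₂) E₁ M₁ E₃ M₃ :=
  natbsth_bsthole_composition_general hdisj H₁.to_bsthole H₂
end

section
/- Static-parameter contraction lemma (instance of the static-parameter contraction theorem): for all tail-tree heaps h₁, h₂ with disjoint domains, locations E₁, E₂, E₃ and multisets of integers M₁, M₂, M₃, if stabsth(h₁, E₁, M₁, E₂, M₂, E₃) and tailbsth(h₂, E₂, M₂, E₃, M₃) hold, then tailbsth(h₁ ∗ h₂, E₁, M₁, E₃, M₃) holds. -/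
/-- A tail-tree heap: finite partial map from locations to
(left, right, tail, data) quadruples. -/
abbrev TailTreeHeap : Type := Finmap (fun _ : Loc => Loc × Loc × Loc × ℤ)

/-- `tbst h E M B` : complete binary search tree rooted at `E`, all of whose
nodes have tail pointer `B`. -/
inductive tbst : TailTreeHeap → Loc → Multiset ℤ → Loc → Prop
  | base (h : TailTreeHeap) (E B : Loc) (M : Multiset ℤ) :
      E = 0 → M = ∅ → h = ∅ → tbst h E M B
  | ind (h : TailTreeHeap) (E B : Loc) (M : Multiset ℤ)
      (X Y : Loc) (v : ℤ) (M₁ M₂ : Multiset ℤ) (h₁ h₂ : TailTreeHeap) :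
      (Finmap.singleton E (X, Y, B, v)).Disjoint h₁ →
      (Finmap.singleton E (X, Y, B, v)).Disjoint h₂ →
      h₁.Disjoint h₂ →
      h = Finmap.singleton E (X, Y, B, v) ∪ h₁ ∪ h₂ →
      tbst h₁ X M₁ B → tbst h₂ Y M₂ B →
      M = {v} + M₁ + M₂ →
      (∀ m ∈ M₁, m < v) → (∀ m ∈ M₂, v < m) →
      tbst h E M B

/-- `stabsth h E M₁ F M₂ B` : binary search tree with one hole `F` in which
every node has the static tail pointer `B`. -/
inductive stabsth : TailTreeHeap → Loc → Multiset ℤ → Loc → Multiset ℤ → Loc → Prop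
  | base (h : TailTreeHeap) (E F B : Loc) (M₁ M₂ : Multiset ℤ) :
      E = F → M₁ = M₂ → h = ∅ → stabsth h E M₁ F M₂ B
  | right (h : TailTreeHeap) (E F B : Loc) (M₁ M₂ : Multiset ℤ)
      (X Y : Loc) (v : ℤ) (M₃ M₄ : Multiset ℤ) (h₁ h₂ : TailTreeHeap) :
      (Finmap.singleton E (X, Y, B, v)).Disjoint h₁ →
      (Finmap.singleton E (X, Y, B, v)).Disjoint h₂ →
      h₁.Disjoint h₂ →
      h = Finmap.singleton E (X, Y, B, v) ∪ h₁ ∪ h₂ →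
      tbst h₁ X M₃ B → stabsth h₂ Y M₄ F M₂ B →
      M₁ = {v} + M₃ + M₄ →
      (∀ m ∈ M₃, m < v) → (∀ m ∈ M₄, v < m) →
      stabsth h E M₁ F M₂ B
  | left (h : TailTreeHeap) (E F B : Loc) (M₁ M₂ : Multiset ℤ)
      (X Y : Loc) (v : ℤ) (M₃ M₄ : Multiset ℤ) (h₁ h₂ : TailTreeHeap) :
      (Finmap.singleton E (X, Y, B, v)).Disjoint h₁ →
      (Finmap.singleton E (X, Y, B, v)).Disjoint h₂ →
      h₁.Disjoint h₂ →
      h = Finmap.singleton E (X, Y, B, v) ∪ h₁ ∪ h₂ →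
      stabsth h₁ X M₃ F M₂ B → tbst h₂ Y M₄ B →
      M₁ = {v} + M₃ + M₄ →
      (∀ m ∈ M₃, m < v) → (∀ m ∈ M₄, v < m) →
      stabsth h E M₁ F M₂ B

/-- `tailbsth h E M₁ F M₂` : same rules as `stabsth` with the static parameter
`B` replaced everywhere by the hole parameter `F`. -/
inductive tailbsth : TailTreeHeap → Loc → Multiset ℤ → Loc → Multiset ℤ → Prop
  | base (h : TailTreeHeap) (E F : Loc) (M₁ M₂ : Multiset ℤ) :
      E = F → M₁ = M₂ → h = ∅ → tailbsth h E M₁ F M₂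
  | right (h : TailTreeHeap) (E F : Loc) (M₁ M₂ : Multiset ℤ)
      (X Y : Loc) (v : ℤ) (M₃ M₄ : Multiset ℤ) (h₁ h₂ : TailTreeHeap) :
      (Finmap.singleton E (X, Y, F, v)).Disjoint h₁ →
      (Finmap.singleton E (X, Y, F, v)).Disjoint h₂ →
      h₁.Disjoint h₂ →
      h = Finmap.singleton E (X, Y, F, v) ∪ h₁ ∪ h₂ →
      tbst h₁ X M₃ F → tailbsth h₂ Y M₄ F M₂ →
      M₁ = {v} + M₃ + M₄ →
      (∀ m ∈ M₃, m < v) → (∀ m ∈ M₄, v < m) →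
      tailbsth h E M₁ F M₂
  | left (h : TailTreeHeap) (E F : Loc) (M₁ M₂ : Multiset ℤ)
      (X Y : Loc) (v : ℤ) (M₃ M₄ : Multiset ℤ) (h₁ h₂ : TailTreeHeap) :
      (Finmap.singleton E (X, Y, F, v)).Disjoint h₁ →
      (Finmap.singleton E (X, Y, F, v)).Disjoint h₂ →
      h₁.Disjoint h₂ →
      h = Finmap.singleton E (X, Y, F, v) ∪ h₁ ∪ h₂ →
      tailbsth h₁ X M₃ F M₂ → tbst h₂ Y M₄ F →
      M₁ = {v} + M₃ + M₄ →
      (∀ m ∈ M₃, m < v) → (∀ m ∈ M₄, v < m) →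
      tailbsth h E M₁ F M₂

theorem stabsth.trans {h₁ h₂ : TailTreeHeap} {E₁ E₂ E₃ B : Loc} {M₁ M₂ M₃ : Multiset ℤ}
    (upper : stabsth h₁ E₁ M₁ E₂ M₂ B) (lower : stabsth h₂ E₂ M₂ E₃ M₃ B)
    (disj : h₁.Disjoint h₂) : stabsth (h₁ ∪ h₂) E₁ M₁ E₃ M₃ B := by
  induction upper with
  | base _ _ _ _ _ _ root_eq keys_eq heap_eq =>
    subst root_eq keys_eq heap_eq
    rwa [Finmap.empty_union]
  | right _ _ _ _ _ _ X Y v _ _ l r root_l root_r l_r heap_eq left_tree _ keys_eq lt_v v_lt ih =>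
    subst heap_eq
    simp only [Finmap.disjoint_union_left] at disj
    obtain ⟨⟨root_h₂, l_h₂⟩, r_h₂⟩ := disj
    have root_rh₂ := (Finmap.disjoint_union_right _ r h₂).mpr ⟨root_r, root_h₂⟩
    have l_rh₂ := (Finmap.disjoint_union_right l r h₂).mpr ⟨l_r, l_h₂⟩
    exact .right _ _ _ _ _ _ X Y v _ _ l (r ∪ h₂) root_l root_rh₂ l_rh₂ Finmap.union_assoc
      left_tree (ih lower r_h₂) keys_eq lt_v v_lt
  | left _ _ _ _ _ _ X Y v _ _ l r root_l root_r l_r heap_eq _ right_tree keys_eq lt_v v_lt ih =>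
    subst heap_eq
    simp only [Finmap.disjoint_union_left] at disj
    obtain ⟨⟨root_h₂, l_h₂⟩, r_h₂⟩ := disj
    have root_lh₂ := (Finmap.disjoint_union_right _ l h₂).mpr ⟨root_l, root_h₂⟩
    have lh₂_r := (Finmap.disjoint_union_left l h₂ r).mpr ⟨l_r, r_h₂.symm⟩
    refine .left _ _ _ _ _ _ X Y v _ _ (l ∪ h₂) r root_lh₂ root_r lh₂_r ?_
      (ih lower l_h₂) right_tree keys_eq lt_v v_lt
    rw [finmap_union_right_comm_of_disjoint _ r_h₂, Finmap.union_assoc (s₂ := l)]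

theorem tailbsth_iff_stabsth {h : TailTreeHeap} {E F : Loc} {M₁ M₂ : Multiset ℤ} :
    tailbsth h E M₁ F M₂ ↔ stabsth h E M₁ F M₂ F := by
  constructor
  · intro segment
    induction segment with
    | base _ _ _ _ _ root_eq keys_eq heap_eq =>
      exact .base _ _ _ _ _ _ root_eq keys_eq heap_eq
    | right _ _ _ _ _ X Y v _ _ l r root_l root_r l_r heap_eq left_tree _ keys_eq lt_v v_lt ih =>
      exact .right _ _ _ _ _ _ X Y v _ _ l r root_l root_r l_r heap_eq left_tree ih keys_eq
        lt_v v_lt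
    | left _ _ _ _ _ X Y v _ _ l r root_l root_r l_r heap_eq _ right_tree keys_eq lt_v v_lt ih =>
      exact .left _ _ _ _ _ _ X Y v _ _ l r root_l root_r l_r heap_eq ih right_tree keys_eq
        lt_v v_lt
  · suffices of_tail_eq_hole : ∀ B, stabsth h E M₁ F M₂ B → B = F → tailbsth h E M₁ F M₂ from
      fun segment => of_tail_eq_hole F segment rfl
    intro B segment tail_eq
    induction segment with
    | base _ _ _ _ _ _ root_eq keys_eq heap_eq =>
      exact .base _ _ _ _ _ root_eq keys_eq heap_eq
    | right _ _ _ _ _ _ X Y v _ _ l r root_l root_r l_r heap_eq left_tree _ keys_eq lt_v v_lt ih =>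
      subst tail_eq
      exact .right _ _ _ _ _ X Y v _ _ l r root_l root_r l_r heap_eq left_tree (ih rfl) keys_eq
        lt_v v_lt
    | left _ _ _ _ _ _ X Y v _ _ l r root_l root_r l_r heap_eq _ right_tree keys_eq lt_v v_lt ih =>
      subst tail_eq
      exact .left _ _ _ _ _ X Y v _ _ l r root_l root_r l_r heap_eq (ih rfl) right_tree keys_eq
        lt_v v_lt

/-- Static-parameter contraction lemma. -/
theorem stabsth_tailbsth_composition
    (h₁ h₂ : TailTreeHeap) (hdisj : h₁.Disjoint h₂)
    (E₁ E₂ E₃ : Loc) (M₁ M₂ M₃ : Multiset ℤ)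
    (H₁ : stabsth h₁ E₁ M₁ E₂ M₂ E₃) (H₂ : tailbsth h₂ E₂ M₂ E₃ M₃) :
    tailbsth (h₁ ∪ h₂) E₁ M₁ E₃ M₃ := by
  exact tailbsth_iff_stabsth.mpr (H₁.trans (tailbsth_iff_stabsth.mp H₂) hdisj)
end

section
/- Pseudo-composition lemma for neqbsthole: for all tree heaps h₁, h₂, h₃ with pairwise disjoint domains, locations E₁, E₂, E₃, X, Y, integer v, and multisets of integers M₁, M₂, M₃, if neqbsthole(h₁, E₁, M₁, E₂, M₂), neqbsthole(h₂, E₂, M₂, E₃, M₃), and h₃ = {E₃ ↦ (X, Y, v)}, then neqbsthole(h₁ ∗ h₂, E₁, M₁, E₃, M₃) holds (so the composed formula with the frame E₃ ↦ (X, Y, v) entails neqbsthole(E₁, M₁, E₃, M₃) separately conjoined with that frame). -/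
/-- `neqbsthole` : same rules as `bsthole` with the additional constraint `E ≠ F`
added to the body of each inductive rule. -/
inductive neqbsthole : TreeHeap → Loc → Multiset ℤ → Loc → Multiset ℤ → Prop
  | base (h : TreeHeap) (E F : Loc) (M₁ M₂ : Multiset ℤ) :
      E = F → M₁ = M₂ → h = ∅ → neqbsthole h E M₁ F M₂
  | right (h : TreeHeap) (E F : Loc) (M₁ M₂ : Multiset ℤ)
      (X Y : Loc) (v : ℤ) (M₃ M₄ : Multiset ℤ) (h₁ h₂ : TreeHeap) :
      (Finmap.singleton E (X, Y, v)).Disjoint h₁ →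
      (Finmap.singleton E (X, Y, v)).Disjoint h₂ →
      h₁.Disjoint h₂ →
      h = Finmap.singleton E (X, Y, v) ∪ h₁ ∪ h₂ →
      bst h₁ X M₃ → neqbsthole h₂ Y M₄ F M₂ →
      M₁ = {v} + M₃ + M₄ →
      (∀ m ∈ M₃, m < v) → (∀ m ∈ M₄, v < m) →
      E ≠ F →
      neqbsthole h E M₁ F M₂
  | left (h : TreeHeap) (E F : Loc) (M₁ M₂ : Multiset ℤ)
      (X Y : Loc) (v : ℤ) (M₃ M₄ : Multiset ℤ) (h₁ h₂ : TreeHeap) :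
      (Finmap.singleton E (X, Y, v)).Disjoint h₁ →
      (Finmap.singleton E (X, Y, v)).Disjoint h₂ →
      h₁.Disjoint h₂ →
      h = Finmap.singleton E (X, Y, v) ∪ h₁ ∪ h₂ →
      neqbsthole h₁ X M₃ F M₂ → bst h₂ Y M₄ →
      M₁ = {v} + M₃ + M₄ →
      (∀ m ∈ M₃, m < v) → (∀ m ∈ M₄, v < m) →
      E ≠ F →
      neqbsthole h E M₁ F M₂

theorem finmap_union_right_comm_of_disjoint_s11 {α : Type*} {β : α → Type*} [DecidableEq α]
    {s₂ s₃ : Finmap β} (hd : s₂.Disjoint s₃) (s₁ : Finmap β) : s₁ ∪ s₂ ∪ s₃ = s₁ ∪ s₃ ∪ s₂ := by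
  rw [Finmap.union_assoc, Finmap.union_comm_of_disjoint hd, ← Finmap.union_assoc]

/-- Induct on the upper segment: `h₂` is absorbed into the child heap that contains the hole, and
moving the hole to `E₃` keeps each guard `E ≠ F` because the spine of `h₁` is allocated in `h₁`,
whereas `E₃` is not. -/
theorem neqbsthole_pseudo_composition_general {h₁ h₂ : TreeHeap} {E₁ E₂ E₃ : Loc}
    {M₁ M₂ M₃ : Multiset ℤ} (hd : h₁.Disjoint h₂) (hE₃ : E₃ ∉ h₁)
    (H₁ : neqbsthole h₁ E₁ M₁ E₂ M₂) (H₂ : neqbsthole h₂ E₂ M₂ E₃ M₃) :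
    neqbsthole (h₁ ∪ h₂) E₁ M₁ E₃ M₃ := by
  induction H₁ with
  | base _ _ _ _ _ hE hM hh =>
    subst hE hM hh
    rwa [Finmap.empty_union]
  | right _ _ _ _ _ _ _ _ _ _ hl hr hcl hcr hlr hh hbst _ hM hlt hgt _ ih =>
    subst hh
    simp only [Finmap.disjoint_union_left] at hd
    simp only [Finmap.mem_union, Finmap.mem_singleton, not_or] at hE₃
    obtain ⟨⟨hc₂, hl₂⟩, hr₂⟩ := hd
    obtain ⟨⟨hE₃c, -⟩, hE₃r⟩ := hE₃
    exact .right _ _ _ _ _ _ _ _ _ _ _ _ hcl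
      ((Finmap.disjoint_union_right _ _ _).2 ⟨hcr, hc₂⟩)
      ((Finmap.disjoint_union_right _ _ _).2 ⟨hlr, hl₂⟩)
      Finmap.union_assoc hbst (ih hr₂ hE₃r H₂) hM hlt hgt (Ne.symm hE₃c)
  | left _ E _ _ _ X Y v _ _ hl hr hcl hcr hlr hh _ hbst hM hlt hgt _ ih =>
    subst hh
    simp only [Finmap.disjoint_union_left] at hd
    simp only [Finmap.mem_union, Finmap.mem_singleton, not_or] at hE₃
    obtain ⟨⟨hc₂, hl₂⟩, hr₂⟩ := hd
    obtain ⟨⟨hE₃c, hE₃l⟩, -⟩ := hE₃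
    have hheap : Finmap.singleton E (X, Y, v) ∪ hl ∪ hr ∪ h₂ =
        Finmap.singleton E (X, Y, v) ∪ (hl ∪ h₂) ∪ hr := by
      rw [finmap_union_right_comm_of_disjoint_s11 hr₂, Finmap.union_assoc (s₂ := hl)]
    exact .left _ _ _ _ _ _ _ _ _ _ _ _
      ((Finmap.disjoint_union_right _ _ _).2 ⟨hcl, hc₂⟩) hcr
      ((Finmap.disjoint_union_left _ _ _).2 ⟨hlr, hr₂.symm⟩)
      hheap (ih hl₂ hE₃l H₂) hbst hM hlt hgt (Ne.symm hE₃c)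

/-- Pseudo-composition lemma for `neqbsthole`. -/
theorem neqbsthole_pseudo_composition
    (h₁ h₂ h₃ : TreeHeap)
    (hd₁₂ : h₁.Disjoint h₂) (hd₁₃ : h₁.Disjoint h₃) (hd₂₃ : h₂.Disjoint h₃)
    (E₁ E₂ E₃ X Y : Loc) (v : ℤ) (M₁ M₂ M₃ : Multiset ℤ)
    (H₁ : neqbsthole h₁ E₁ M₁ E₂ M₂) (H₂ : neqbsthole h₂ E₂ M₂ E₃ M₃)
    (H₃ : h₃ = Finmap.singleton E₃ (X, Y, v)) :
    neqbsthole (h₁ ∪ h₂) E₁ M₁ E₃ M₃ := by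
  subst H₃
  exact neqbsthole_pseudo_composition_general hd₁₂
    (fun hE₃ => hd₁₃ E₃ hE₃ ((Finmap.mem_singleton _ _ _).2 rfl)) H₁ H₂
end

section
/- Composition lemma for binary search trees with parent pointers and one hole: for all parent-tree heaps h₁, h₂ with disjoint domains, locations E₁, E₂, E₃, Pr₁, Pr₂, Pr₃ and multisets of integers M₁, M₂, M₃, if prtbsthole(h₁, E₁, Pr₁, M₁, E₂, Pr₂, M₂) and prtbsthole(h₂, E₂, Pr₂, M₂, E₃, Pr₃, M₃) hold, then prtbsthole(h₁ ∗ h₂, E₁, Pr₁, M₁, E₃, Pr₃, M₃) holds. -/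
/-- A parent-tree heap: finite partial map from locations to
(left, right, parent, data) quadruples. -/
abbrev PTreeHeap : Type := Finmap (fun _ : Loc => Loc × Loc × Loc × ℤ)

/-- `prtbst h E Pr M` : binary search tree with parent pointers, rooted at `E`
with parent `Pr`. -/
inductive prtbst : PTreeHeap → Loc → Loc → Multiset ℤ → Prop
  | base (h : PTreeHeap) (E Pr : Loc) (M : Multiset ℤ) :
      E = 0 → M = ∅ → h = ∅ → prtbst h E Pr M
  | ind (h : PTreeHeap) (E Pr : Loc) (M : Multiset ℤ)
      (X Y : Loc) (v : ℤ) (M₁ M₂ : Multiset ℤ) (h₁ h₂ : PTreeHeap) :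
      (Finmap.singleton E (X, Y, Pr, v)).Disjoint h₁ →
      (Finmap.singleton E (X, Y, Pr, v)).Disjoint h₂ →
      h₁.Disjoint h₂ →
      h = Finmap.singleton E (X, Y, Pr, v) ∪ h₁ ∪ h₂ →
      prtbst h₁ X E M₁ → prtbst h₂ Y E M₂ →
      M = {v} + M₁ + M₂ →
      (∀ m ∈ M₁, m < v) → (∀ m ∈ M₂, v < m) →
      prtbst h E Pr M

/-- `prtbsthole h E Pr₁ M₁ F Pr₂ M₂` : binary search tree with parent pointers
and one hole `F` with parent `Pr₂`. -/
inductive prtbsthole :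
    PTreeHeap → Loc → Loc → Multiset ℤ → Loc → Loc → Multiset ℤ → Prop
  | base (h : PTreeHeap) (E F Pr₁ Pr₂ : Loc) (M₁ M₂ : Multiset ℤ) :
      E = F → Pr₁ = Pr₂ → M₁ = M₂ → h = ∅ → prtbsthole h E Pr₁ M₁ F Pr₂ M₂
  | right (h : PTreeHeap) (E F Pr₁ Pr₂ : Loc) (M₁ M₂ : Multiset ℤ)
      (X Y : Loc) (v : ℤ) (M₃ M₄ : Multiset ℤ) (h₁ h₂ : PTreeHeap) :
      (Finmap.singleton E (X, Y, Pr₁, v)).Disjoint h₁ →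
      (Finmap.singleton E (X, Y, Pr₁, v)).Disjoint h₂ →
      h₁.Disjoint h₂ →
      h = Finmap.singleton E (X, Y, Pr₁, v) ∪ h₁ ∪ h₂ →
      prtbst h₁ X E M₃ → prtbsthole h₂ Y E M₄ F Pr₂ M₂ →
      M₁ = {v} + M₃ + M₄ →
      (∀ m ∈ M₃, m < v) → (∀ m ∈ M₄, v < m) →
      prtbsthole h E Pr₁ M₁ F Pr₂ M₂
  | left (h : PTreeHeap) (E F Pr₁ Pr₂ : Loc) (M₁ M₂ : Multiset ℤ)
      (X Y : Loc) (v : ℤ) (M₃ M₄ : Multiset ℤ) (h₁ h₂ : PTreeHeap) :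
      (Finmap.singleton E (X, Y, Pr₁, v)).Disjoint h₁ →
      (Finmap.singleton E (X, Y, Pr₁, v)).Disjoint h₂ →
      h₁.Disjoint h₂ →
      h = Finmap.singleton E (X, Y, Pr₁, v) ∪ h₁ ∪ h₂ →
      prtbsthole h₁ X E M₃ F Pr₂ M₂ → prtbst h₂ Y E M₄ →
      M₁ = {v} + M₃ + M₄ →
      (∀ m ∈ M₃, m < v) → (∀ m ∈ M₄, v < m) →
      prtbsthole h E Pr₁ M₁ F Pr₂ M₂

/-! The composite has the same spine as `h₁`, with the hole at its end filled by `h₂`. The induction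
follows this spine: at each cell, `h₂` is absorbed into the subheap on the side of the hole, while
the other subtree is unchanged. The order constraints survive because the multiset at a node already
counts the data below the hole. -/

/-- The three-fold separating conjunction `h = a ∗ b ∗ c` of finite maps: `a`, `b` and `c` are
pairwise disjoint and their union is `h`. At a tree node they are the root cell and the heaps of the
left and right subtrees. -/
structure IsSepUnion₃ {α : Type*} {β : α → Type*} [DecidableEq α] (h a b c : Finmap β) : Prop where
  disjoint₁₂ : a.Disjoint b
  disjoint₁₃ : a.Disjoint c
  disjoint₂₃ : b.Disjoint c
  eq_union : h = a ∪ b ∪ c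

namespace IsSepUnion₃

variable {α : Type*} {β : α → Type*} [DecidableEq α] {h a b c k : Finmap β}

theorem right_comm (H : IsSepUnion₃ h a b c) : IsSepUnion₃ h a c b where
  disjoint₁₂ := H.disjoint₁₃
  disjoint₁₃ := H.disjoint₁₂
  disjoint₂₃ := H.disjoint₂₃.symm
  eq_union := by
    rw [H.eq_union, Finmap.union_assoc, Finmap.union_comm_of_disjoint H.disjoint₂₃,
      ← Finmap.union_assoc]

theorem disjoint_iff (H : IsSepUnion₃ h a b c) :
    h.Disjoint k ↔ a.Disjoint k ∧ b.Disjoint k ∧ c.Disjoint k := by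
  rw [H.eq_union, Finmap.disjoint_union_left, Finmap.disjoint_union_left, and_assoc]

theorem union_right (H : IsSepUnion₃ h a b c) (hk : h.Disjoint k) :
    IsSepUnion₃ (h ∪ k) a b (c ∪ k) := by
  obtain ⟨hak, hbk, -⟩ := H.disjoint_iff.mp hk
  exact {
    disjoint₁₂ := H.disjoint₁₂
    disjoint₁₃ := (Finmap.disjoint_union_right ..).mpr ⟨H.disjoint₁₃, hak⟩
    disjoint₂₃ := (Finmap.disjoint_union_right ..).mpr ⟨H.disjoint₂₃, hbk⟩
    eq_union := by rw [H.eq_union, Finmap.union_assoc] }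

theorem union_middle (H : IsSepUnion₃ h a b c) (hk : h.Disjoint k) :
    IsSepUnion₃ (h ∪ k) a (b ∪ k) c :=
  (H.right_comm.union_right hk).right_comm

end IsSepUnion₃

/-- Composition lemma for binary search trees with parent pointers and one hole. -/
theorem prtbsthole_composition
    (h₁ h₂ : PTreeHeap) (hdisj : h₁.Disjoint h₂)
    (E₁ E₂ E₃ Pr₁ Pr₂ Pr₃ : Loc) (M₁ M₂ M₃ : Multiset ℤ)
    (H₁ : prtbsthole h₁ E₁ Pr₁ M₁ E₂ Pr₂ M₂)
    (H₂ : prtbsthole h₂ E₂ Pr₂ M₂ E₃ Pr₃ M₃) :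
    prtbsthole (h₁ ∪ h₂) E₁ Pr₁ M₁ E₃ Pr₃ M₃ := by
  induction H₁ with
  | base h E F Pr Pr' M M' hE hPr hM hh =>
    subst hE hPr hM hh
    rwa [Finmap.empty_union]
  | right h E F Pr Pr' M M' X Y v Mₗ Mᵣ hₗ hᵣ dₗ dᵣ dₗᵣ hh tree _ hM lt_v v_lt ih =>
    have sep : IsSepUnion₃ h _ hₗ hᵣ := ⟨dₗ, dᵣ, dₗᵣ, hh⟩
    obtain ⟨-, -, hdisjᵣ⟩ := sep.disjoint_iff.mp hdisj
    obtain ⟨dₗ', dᵣ', dₗᵣ', hh'⟩ := sep.union_right hdisj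
    exact .right _ E _ Pr _ M _ X Y v Mₗ Mᵣ hₗ (hᵣ ∪ h₂) dₗ' dᵣ' dₗᵣ' hh'
      tree (ih hdisjᵣ H₂) hM lt_v v_lt
  | left h E F Pr Pr' M M' X Y v Mₗ Mᵣ hₗ hᵣ dₗ dᵣ dₗᵣ hh _ tree hM lt_v v_lt ih =>
    have sep : IsSepUnion₃ h _ hₗ hᵣ := ⟨dₗ, dᵣ, dₗᵣ, hh⟩
    obtain ⟨-, hdisjₗ, -⟩ := sep.disjoint_iff.mp hdisj
    obtain ⟨dₗ', dᵣ', dₗᵣ', hh'⟩ := sep.union_middle hdisj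
    exact .left _ E _ Pr _ M _ X Y v Mₗ Mᵣ (hₗ ∪ h₂) hᵣ dₗ' dᵣ' dₗᵣ' hh'
      (ih hdisjₗ H₂) tree hM lt_v v_lt
end

section
/- A list segment of odd length is a points-to cell followed by a list segment of even length: for every shape heap h and locations E, F, lsegodd(h, E, F) holds if and only if there exist a location X and a heap h' with h = {E ↦ X} ∗ h' and lsegeven(h', X, F). -/
/-- A shape heap: finite partial map from locations to locations (next pointer). -/
abbrev ShapeHeap : Type := Finmap (fun _ : Loc => Loc)

/-- `lsegeven h E F` : list segment of even length. -/
inductive lsegeven : ShapeHeap → Loc → Loc → Prop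
  | base (h : ShapeHeap) (E F : Loc) : E = F → h = ∅ → lsegeven h E F
  | ind (h : ShapeHeap) (E F X Y : Loc) (h' : ShapeHeap) :
      (Finmap.singleton E X : ShapeHeap).Disjoint (Finmap.singleton X Y : ShapeHeap) →
      (Finmap.singleton E X : ShapeHeap).Disjoint h' →
      (Finmap.singleton X Y : ShapeHeap).Disjoint h' →
      h = Finmap.singleton E X ∪ Finmap.singleton X Y ∪ h' →
      lsegeven h' Y F →
      lsegeven h E F

/-- `lsegodd h E F` : list segment of odd length. -/
inductive lsegodd : ShapeHeap → Loc → Loc → Prop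
  | base (h : ShapeHeap) (E F : Loc) : h = Finmap.singleton E F → lsegodd h E F
  | ind (h : ShapeHeap) (E F X Y : Loc) (h' : ShapeHeap) :
      (Finmap.singleton E X : ShapeHeap).Disjoint (Finmap.singleton X Y) →
      (Finmap.singleton E X : ShapeHeap).Disjoint h' →
      (Finmap.singleton X Y : ShapeHeap).Disjoint h' →
      h = Finmap.singleton E X ∪ Finmap.singleton X Y ∪ h' →
      lsegodd h' Y F →
      lsegodd h E F

section IsListSegment

variable {α : Type*} [DecidableEq α]

/-- `IsListSegment n h E F`: the heap `h` is a list segment from `E` to `F` of exactly `n` cells,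
for locations in an arbitrary type `α`. As in `lsegeven` and `lsegodd`, only the addresses of the
cells must be distinct, so `F` may itself be allocated in `h`. -/
def IsListSegment : ℕ → Finmap (fun _ : α => α) → α → α → Prop
  | 0, h, E, F => E = F ∧ h = ∅
  | n + 1, h, E, F => ∃ (X : α) (h' : Finmap fun _ : α => α),
      (Finmap.singleton E X).Disjoint h' ∧ h = Finmap.singleton E X ∪ h' ∧ IsListSegment n h' X F

theorem isListSegment_one_iff {h : Finmap fun _ : α => α} {E F : α} :
    IsListSegment 1 h E F ↔ h = Finmap.singleton E F := by
  constructor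
  · rintro ⟨X, h', -, rfl, rfl, rfl⟩
    exact Finmap.union_empty
  · rintro rfl
    exact ⟨F, ∅, (Finmap.disjoint_empty _).symm, Finmap.union_empty.symm, rfl, rfl⟩

theorem isListSegment_add_two_iff {n : ℕ} {h : Finmap fun _ : α => α} {E F : α} :
    IsListSegment (n + 2) h E F ↔
      ∃ (X Y : α) (h' : Finmap fun _ : α => α),
        (Finmap.singleton E X).Disjoint (Finmap.singleton X Y : Finmap fun _ : α => α) ∧
        (Finmap.singleton E X).Disjoint h' ∧
        (Finmap.singleton X Y).Disjoint h' ∧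
        h = Finmap.singleton E X ∪ Finmap.singleton X Y ∪ h' ∧
        IsListSegment n h' Y F := by
  constructor
  · rintro ⟨X, _, hE, rfl, Y, h', hXh', rfl, hseg⟩
    obtain ⟨hEX, hEh'⟩ := (Finmap.disjoint_union_right _ _ _).1 hE
    exact ⟨X, Y, h', hEX, hEh', hXh', Finmap.union_assoc.symm, hseg⟩
  · rintro ⟨X, Y, h', hEX, hEh', hXh', rfl, hseg⟩
    exact ⟨X, Finmap.singleton X Y ∪ h', (Finmap.disjoint_union_right _ _ _).2 ⟨hEX, hEh'⟩,
      Finmap.union_assoc, Y, h', hXh', rfl, hseg⟩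

end IsListSegment

theorem lsegeven_iff_exists_isListSegment {h : ShapeHeap} {E F : Loc} :
    lsegeven h E F ↔ ∃ n, IsListSegment (2 * n) h E F := by
  constructor
  · intro heven
    induction heven with
    | base h E F hEF hh => exact ⟨0, hEF, hh⟩
    | ind h E F X Y h' hEX hEh' hXh' hh _ ih =>
      obtain ⟨n, hn⟩ := ih
      exact ⟨n + 1, isListSegment_add_two_iff.2 ⟨X, Y, h', hEX, hEh', hXh', hh, hn⟩⟩
  · rintro ⟨n, hn⟩
    induction n generalizing h E with
    | zero => exact .base h E F hn.1 hn.2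
    | succ n ih =>
      obtain ⟨X, Y, h', hEX, hEh', hXh', hh, hseg⟩ := isListSegment_add_two_iff.1 hn
      exact .ind h E F X Y h' hEX hEh' hXh' hh (ih hseg)

theorem lsegodd_iff_exists_isListSegment {h : ShapeHeap} {E F : Loc} :
    lsegodd h E F ↔ ∃ n, IsListSegment (2 * n + 1) h E F := by
  constructor
  · intro hodd
    induction hodd with
    | base h E F hh => exact ⟨0, isListSegment_one_iff.2 hh⟩
    | ind h E F X Y h' hEX hEh' hXh' hh _ ih =>
      obtain ⟨n, hn⟩ := ih
      exact ⟨n + 1, isListSegment_add_two_iff.2 ⟨X, Y, h', hEX, hEh', hXh', hh, hn⟩⟩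
  · rintro ⟨n, hn⟩
    induction n generalizing h E with
    | zero => exact .base h E F (isListSegment_one_iff.1 hn)
    | succ n ih =>
      obtain ⟨X, Y, h', hEX, hEh', hXh', hh, hseg⟩ := isListSegment_add_two_iff.1 hn
      exact .ind h E F X Y h' hEX hEh' hXh' hh (ih hseg)

/-- A list segment of odd length is a points-to cell followed by a list
segment of even length. -/
theorem lsegodd_iff_cell_lsegeven
    (h : ShapeHeap) (E F : Loc) :
    lsegodd h E F ↔
      ∃ (X : Loc) (h' : ShapeHeap),
        (Finmap.singleton E X : ShapeHeap).Disjoint h' ∧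
        h = Finmap.singleton E X ∪ h' ∧
        lsegeven h' X F := by
  rw [lsegodd_iff_exists_isListSegment]
  simp only [lsegeven_iff_exists_isListSegment]
  constructor
  · rintro ⟨n, X, h', hdisj, hh, hseg⟩
    exact ⟨X, h', hdisj, hh, n, hseg⟩
  · rintro ⟨X, h', hdisj, hh, n, hseg⟩
    exact ⟨n, X, h', hdisj, hh, hseg⟩
end

section
/- Composition lemma for list segments of even length (instance of the theorem that syntactically compositional predicates are semantically compositional): for all shape heaps h₁, h₂ with disjoint domains and locations E, F, G, if lsegeven(h₁, E, F) and lsegeven(h₂, F, G) hold, then lsegeven(h₁ ∗ h₂, E, G) holds. -/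
/-!
An even-length list segment is a chain of two-cell blocks with pairwise disjoint heaps. Prepending
a block looks only at where the rest of the chain starts and carries its far end along unchanged, so
whatever the blocks are, two chains that meet at a location concatenate as lists do.
-/

section BlockSegment

variable {ι α : Type*} {β : α → Type*} [DecidableEq α]

/-- The segments generated by a block predicate, where `B b x y` says that the heap `b` is a block
leading from `x` to `y`: finitely many blocks on disjoint heaps, each starting where the previous
one ends. Endpoints live in a type of their own, not necessarily that of the addresses `α`. -/
inductive BlockSegment (B : Finmap β → ι → ι → Prop) : Finmap β → ι → ι → Prop
  | nil (x : ι) : BlockSegment B ∅ x x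
  | cons {b h : Finmap β} {x y z : ι} :
      B b x y → b.Disjoint h → BlockSegment B h y z → BlockSegment B (b ∪ h) x z

theorem BlockSegment.union {B : Finmap β → ι → ι → Prop} {h₁ h₂ : Finmap β} {x y z : ι}
    (hdisj : h₁.Disjoint h₂) (hxy : BlockSegment B h₁ x y) (hyz : BlockSegment B h₂ y z) :
    BlockSegment B (h₁ ∪ h₂) x z := by
  induction hxy with
  | nil => rwa [Finmap.empty_union]
  | @cons b h _ _ _ hb hbh _ ih =>
    obtain ⟨hb₂, hh₂⟩ := (Finmap.disjoint_union_left b h h₂).1 hdisj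
    rw [Finmap.union_assoc]
    exact .cons hb ((Finmap.disjoint_union_right b h h₂).2 ⟨hbh, hb₂⟩) (ih hh₂ hyz)

end BlockSegment

/-- The block from which even-length list segments are built: two distinct cells `E ↦ X` and
`X ↦ Y`. -/
def IsTwoCellBlock (b : ShapeHeap) (E Y : Loc) : Prop :=
  ∃ X : Loc, (Finmap.singleton E X : ShapeHeap).Disjoint (Finmap.singleton X Y) ∧
    b = Finmap.singleton E X ∪ Finmap.singleton X Y

theorem lsegeven_iff_blockSegment {h : ShapeHeap} {E F : Loc} :
    lsegeven h E F ↔ BlockSegment IsTwoCellBlock h E F := by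
  constructor
  · intro hseg
    induction hseg with
    | base _ E _ hEF hempty =>
      subst hEF hempty
      exact .nil E
    | ind _ E _ X Y h' hcells hE hX hunion _ ih =>
      subst hunion
      exact .cons ⟨X, hcells, rfl⟩ ((Finmap.disjoint_union_left _ _ h').2 ⟨hE, hX⟩) ih
  · intro hseg
    induction hseg with
    | nil E => exact .base ∅ E E rfl rfl
    | @cons _ h' E Y F hblock hdisj _ ih =>
      obtain ⟨X, hcells, rfl⟩ := hblock
      obtain ⟨hE, hX⟩ := (Finmap.disjoint_union_left _ _ h').1 hdisj
      exact .ind _ E F X Y h' hcells hE hX rfl ih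

/-- Composition lemma for list segments of even length. -/
theorem lsegeven_composition
    (h₁ h₂ : ShapeHeap) (hdisj : h₁.Disjoint h₂)
    (E F G : Loc)
    (H₁ : lsegeven h₁ E F) (H₂ : lsegeven h₂ F G) :
    lsegeven (h₁ ∪ h₂) E G := by
  rw [lsegeven_iff_blockSegment] at H₁ H₂ ⊢
  exact H₁.union hdisj H₂
end

section
/- The multiset parameter of a binary search tree equals the multiset of stored values: for every tree heap h, location E and multiset of integers M, if bst(h, E, M) holds then M = values(h), where values(h) is the multiset of data values stored in h. -/
/-- The multiset of data values stored in a tree heap. -/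
def values (h : TreeHeap) : Multiset ℤ :=
  h.entries.map (fun p => p.2.2.2)

section Finmap

universe u v

variable {α : Type u} {β : α → Type v} [DecidableEq α]

theorem kunion_eq_append_of_disjoint_keys {l₁ l₂ : List (Sigma β)}
    (hd : l₁.keys.Disjoint l₂.keys) : l₁.kunion l₂ = l₁ ++ l₂ := by
  induction l₁ with
  | nil => exact List.nil_kunion
  | cons s l ih =>
    rw [List.keys_cons, List.disjoint_cons_left] at hd
    rw [List.kunion_cons, List.kerase_of_notMem_keys hd.1, ih hd.2, List.cons_append]

theorem entries_union_of_disjoint {f g : Finmap β} (hd : f.Disjoint g) :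
    (f ∪ g).entries = f.entries + g.entries := by
  induction f, g using Finmap.induction_on₂ with
  | H a b =>
    have hkeys : a.entries.keys.Disjoint b.entries.keys := fun k ha hb ↦ hd k ha hb
    rw [Finmap.union_toFinmap, AList.toFinmap_entries, AList.union_entries,
      kunion_eq_append_of_disjoint_keys hkeys, ← Multiset.coe_add,
      AList.toFinmap_entries, AList.toFinmap_entries]

end Finmap

theorem values_empty : values ∅ = 0 := rfl

theorem values_singleton (E X Y : Loc) (v : ℤ) :
    values (Finmap.singleton E (X, Y, v)) = {v} := rfl

theorem values_union_of_disjoint {h₁ h₂ : TreeHeap} (hd : h₁.Disjoint h₂) :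
    values (h₁ ∪ h₂) = values h₁ + values h₂ := by
  rw [values, entries_union_of_disjoint hd, Multiset.map_add, values, values]

/-- The multiset parameter of a binary search tree equals the stored values. -/
theorem bst_values
    (h : TreeHeap) (E : Loc) (M : Multiset ℤ)
    (H : bst h E M) :
    M = values h := by
  induction H with
  | base h E M _ hM hh => rw [hM, hh, values_empty, Multiset.empty_eq_zero]
  | ind h E M X Y v M₁ M₂ h₁ h₂ hroot₁ hroot₂ h₁₂ hh _ _ hM _ _ ih₁ ih₂ =>
    have hdisj : (Finmap.singleton E (X, Y, v) ∪ h₁).Disjoint h₂ :=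
      (Finmap.disjoint_union_left _ _ _).2 ⟨hroot₂, h₁₂⟩
    calc
      M = {v} + values h₁ + values h₂ := by rw [hM, ih₁, ih₂]
      _ = values (Finmap.singleton E (X, Y, v) ∪ h₁) + values h₂ := by
        rw [values_union_of_disjoint hroot₁, values_singleton]
      _ = values h := by rw [hh, values_union_of_disjoint hdisj]
end

section
/- Relaxed stronger lemma relating even-length list segments to list segments, second entailment: for all shape heaps h₁, h₂ with disjoint domains and locations E, F, G, if lsegeven(h₁, E, F) and ls(h₂, F, G) hold, then ls(h₁ ∗ h₂, E, G) holds. -/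
/-- `ls h E F` : classic list segment. -/
inductive ls : ShapeHeap → Loc → Loc → Prop
  | base (h : ShapeHeap) (E F : Loc) : E = F → h = ∅ → ls h E F
  | ind (h : ShapeHeap) (E F X : Loc) (h' : ShapeHeap) :
      (Finmap.singleton E X : ShapeHeap).Disjoint h' →
      h = Finmap.singleton E X ∪ h' →
      ls h' X F →
      ls h E F

theorem ls.cons {h : ShapeHeap} {E X F : Loc} (hE : (Finmap.singleton E X).Disjoint h)
    (H : ls h X F) : ls (Finmap.singleton E X ∪ h) E F :=
  .ind _ E F X h hE rfl H

theorem lsegeven.to_ls {h : ShapeHeap} {E F : Loc} (H : lsegeven h E F) : ls h E F := by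
  induction H with
  | base h E F hEF hh => exact .base h E F hEF hh
  | ind h E F X Y h' hEX hE hX hh _ ih =>
    rw [hh, Finmap.union_assoc]
    exact (ih.cons hX).cons ((Finmap.disjoint_union_right _ _ _).2 ⟨hEX, hE⟩)

theorem ls.union {h₁ h₂ : ShapeHeap} {E F G : Loc} (H₁ : ls h₁ E F) (H₂ : ls h₂ F G)
    (hdisj : h₁.Disjoint h₂) : ls (h₁ ∪ h₂) E G := by
  induction H₁ with
  | base h E F hEF hh =>
    subst hEF hh
    rwa [Finmap.empty_union]
  | ind h E F X h' hE hh _ ih =>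
    subst hh
    obtain ⟨hE₂, hdisj'⟩ := (Finmap.disjoint_union_left _ _ _).1 hdisj
    rw [Finmap.union_assoc]
    exact (ih H₂ hdisj').cons ((Finmap.disjoint_union_right _ _ _).2 ⟨hE, hE₂⟩)

/-- Relaxed stronger lemma, second entailment. -/
theorem lsegeven_ls_composition
    (h₁ h₂ : ShapeHeap) (hdisj : h₁.Disjoint h₂)
    (E F G : Loc)
    (H₁ : lsegeven h₁ E F) (H₂ : ls h₂ F G) :
    ls (h₁ ∪ h₂) E G :=
  H₁.to_ls.union H₂ hdisj
end
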